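/- arXiv:math/0012029 — 2 statements merged into one kernel-verified Lean document; each statement's English description precedes it below -/
import Mathlib

section
/- For each unordered pair {α,β} in {{123,231}, {123,312}, {132,321}, {213,321}} of patterns of length three, the number of permutations of {1,…,n} that contain α exactly once and contain β exactly once is s_n(∅;{α,β}) = 2n−5 for all n ≥ 5, and s_4(∅;{α,β}) = 2. -/
/-- Number of occurrences of the pattern `α ∈ S_k` in the permutation `π ∈ S_n`:
the number of strictly increasing choices of `k` indices such that the corresponding
subword of `π` is order-isomorphic to `α`. -/
noncomputable def occCount {k n : ℕ} (α : Equiv.Perm (Fin k)) (π : Equiv.Perm (Fin n)) : ℕ :=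
  Nat.card {f : Fin k → Fin n // StrictMono f ∧ ∀ a b : Fin k, α a < α b ↔ π (f a) < π (f b)}

/-- `π` avoids the pattern `α`. -/
def avoids {k n : ℕ} (α : Equiv.Perm (Fin k)) (π : Equiv.Perm (Fin n)) : Prop :=
  occCount α π = 0

/-- `π` contains the pattern `α` exactly once. -/
def containsOnce {k n : ℕ} (α : Equiv.Perm (Fin k)) (π : Equiv.Perm (Fin n)) : Prop :=
  occCount α π = 1

/-- The pattern `123` (as a permutation of `Fin 3`, 0-indexed). -/
def p123 : Equiv.Perm (Fin 3) := ⟨![0,1,2], ![0,1,2], by decide, by decide⟩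
/-- The pattern `132`. -/
def p132 : Equiv.Perm (Fin 3) := ⟨![0,2,1], ![0,2,1], by decide, by decide⟩
/-- The pattern `213`. -/
def p213 : Equiv.Perm (Fin 3) := ⟨![1,0,2], ![1,0,2], by decide, by decide⟩
/-- The pattern `231`. -/
def p231 : Equiv.Perm (Fin 3) := ⟨![1,2,0], ![2,0,1], by decide, by decide⟩
/-- The pattern `312`. -/
def p312 : Equiv.Perm (Fin 3) := ⟨![2,0,1], ![1,2,0], by decide, by decide⟩
/-- The pattern `321`. -/
def p321 : Equiv.Perm (Fin 3) := ⟨![2,1,0], ![2,1,0], by decide, by decide⟩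

/-- `s_n(α;β)`: the number of permutations of `{1,…,n}` that avoid `α` and contain `β`
exactly once. -/
noncomputable def sAvoidContain (α β : Equiv.Perm (Fin 3)) (n : ℕ) : ℕ :=
  Nat.card {π : Equiv.Perm (Fin n) // avoids α π ∧ containsOnce β π}

/-- `s_n(∅;{α,β})`: the number of permutations of `{1,…,n}` that contain each of `α` and `β`
exactly once. -/
noncomputable def sContainBoth (α β : Equiv.Perm (Fin 3)) (n : ℕ) : ℕ :=
  Nat.card {π : Equiv.Perm (Fin n) // containsOnce α π ∧ containsOnce β π}

/-!
Reversing and complementing words turns each of the four pairs of patterns into `{213, 321}`.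
Neither `213` nor `321` begins with its least letter, so a permutation that begins with its least
letter contains them as often as the permutation obtained by deleting that letter. The count
therefore grows from `n` to `n + 1` by the number of permutations of length `n + 1` that do not
begin with their least letter, and for length at least six there are exactly two of these.

Let `m > 0` be the position of the least letter. An ascent from a position before `m` to one after
`m` is, together with `m`, the occurrence of `213`, and then uniqueness of the occurrences of both
patterns leaves room for at most five letters. Otherwise every letter before `m` exceeds every
letter after it. Then either `m` is the last position or `m` is the second one, and on the
positions strictly to one side of `m` there is a single inversion; the occurrence of `213` starts
with this inversion, which has to consist of the second and third positions from the end of its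
side.
-/

open Equiv Function Set

section Pattern

variable {k n : ℕ}

/-- `f` lists the positions of an occurrence of the pattern `α` in `π`. -/
def IsOccurrence (α : Perm (Fin k)) (π : Perm (Fin n)) (f : Fin k → Fin n) : Prop :=
  StrictMono f ∧ ∀ a b, α a < α b ↔ π (f a) < π (f b)

theorem occCount_eq_card_isOccurrence (α : Perm (Fin k)) (π : Perm (Fin n)) :
    occCount α π = Nat.card {f // IsOccurrence α π f} :=
  rfl

theorem isOccurrence_iff_strictMono {α : Perm (Fin k)} {π : Perm (Fin n)} {f : Fin k → Fin n} :
    IsOccurrence α π f ↔ StrictMono f ∧ StrictMono (π ∘ f ∘ α.symm) := by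
  refine and_congr_right fun _ => ⟨fun h a b hab => ?_, fun h a b => ?_⟩
  · exact (h _ _).mp (by simpa using hab)
  · simpa using (h.lt_iff_lt (a := α a) (b := α b)).symm

theorem isOccurrence_reverse_iff {α : Perm (Fin k)} {π : Perm (Fin n)} {f : Fin k → Fin n} :
    IsOccurrence (α * Fin.revPerm) (π * Fin.revPerm) (Fin.rev ∘ f ∘ Fin.rev) ↔
      IsOccurrence α π f := by
  refine and_congr ⟨fun h a b hab => ?_, fun h => ?_⟩ ⟨fun h a b => ?_, fun h a b => ?_⟩
  · simpa using h (Fin.rev_lt_rev.mpr hab)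
  · exact Fin.rev_strictAnti.comp (h.comp_strictAnti Fin.rev_strictAnti)
  · simpa using h a.rev b.rev
  · simpa using h a.rev b.rev

theorem isOccurrence_complement_iff {α : Perm (Fin k)} {π : Perm (Fin n)} {f : Fin k → Fin n} :
    IsOccurrence (Fin.revPerm * α) (Fin.revPerm * π) f ↔ IsOccurrence α π f := by
  simp only [IsOccurrence, Perm.mul_apply, Fin.revPerm_apply, Fin.rev_lt_rev]
  rw [forall_comm]

theorem occCount_reverse (α : Perm (Fin k)) (π : Perm (Fin n)) :
    occCount (α * Fin.revPerm) (π * Fin.revPerm) = occCount α π :=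
  (Nat.card_congr <| (Fin.revPerm.arrowCongr Fin.revPerm).subtypeEquiv fun _ =>
    isOccurrence_reverse_iff.symm).symm

theorem occCount_complement (α : Perm (Fin k)) (π : Perm (Fin n)) :
    occCount (Fin.revPerm * α) (Fin.revPerm * π) = occCount α π :=
  Nat.card_congr <| Equiv.subtypeEquivRight fun _ => isOccurrence_complement_iff

theorem exists_decomposeFin_symm_zero_eq_iff {π : Perm (Fin (n + 1))} :
    (∃ e, Perm.decomposeFin.symm (0, e) = π) ↔ π 0 = 0 := by
  obtain ⟨⟨p, e⟩, rfl⟩ := Perm.decomposeFin.symm.surjective π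
  simp [eq_comm]

theorem isOccurrence_decomposeFin_symm_zero_iff {α : Perm (Fin k)} {e : Perm (Fin n)}
    {f : Fin k → Fin n} :
    IsOccurrence α (Perm.decomposeFin.symm (0, e)) (Fin.succ ∘ f) ↔ IsOccurrence α e f := by
  simp [IsOccurrence, StrictMono]

theorem IsOccurrence.apply_ne_zero {α : Perm (Fin (k + 1))} (hα : α 0 ≠ 0)
    {π : Perm (Fin (n + 1))} (hπ : π 0 = 0) {f : Fin (k + 1) → Fin (n + 1)}
    (hf : IsOccurrence α π f) (a : Fin (k + 1)) : f a ≠ 0 := by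
  intro ha
  have hf0 : f 0 = 0 := Fin.le_zero_iff.mp (ha ▸ hf.1.monotone (Fin.zero_le a))
  have hlt : π (f (α.symm 0)) < π (f 0) := (hf.2 _ _).mp (by simpa using Fin.pos_iff_ne_zero.mpr hα)
  simp [hf0, hπ] at hlt

theorem occCount_decomposeFin_symm_zero {α : Perm (Fin (k + 1))} (hα : α 0 ≠ 0)
    (e : Perm (Fin n)) : occCount α (Perm.decomposeFin.symm (0, e)) = occCount α e := by
  refine (Nat.card_congr <| Equiv.ofBijective (fun f : {f // IsOccurrence α e f} =>
    ⟨Fin.succ ∘ f.1, isOccurrence_decomposeFin_symm_zero_iff.mpr f.2⟩) ⟨fun f g hfg => ?_, ?_⟩).symm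
  · exact Subtype.ext ((Fin.succ_injective n).comp_left (congrArg Subtype.val hfg))
  · rintro ⟨f, hf⟩
    have hf0 : ∀ a, f a ≠ 0 := IsOccurrence.apply_ne_zero hα (by simp) hf
    obtain ⟨g, rfl⟩ : ∃ g, Fin.succ ∘ g = f := ⟨fun a => (f a).pred (hf0 a), by ext; simp⟩
    exact ⟨⟨g, isOccurrence_decomposeFin_symm_zero_iff.mp hf⟩, rfl⟩

end Pattern

section Count

variable {α β : Perm (Fin 3)} (n : ℕ)

theorem sContainBoth_comm (α β : Perm (Fin 3)) : sContainBoth α β n = sContainBoth β α n := by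
  simp only [sContainBoth, and_comm]

theorem sContainBoth_reverse (α β : Perm (Fin 3)) :
    sContainBoth (α * Fin.revPerm) (β * Fin.revPerm) n = sContainBoth α β n :=
  (Nat.card_congr <| (Equiv.mulRight Fin.revPerm).subtypeEquiv fun π => by
    simp [containsOnce, occCount_reverse]).symm

theorem sContainBoth_complement (α β : Perm (Fin 3)) :
    sContainBoth (Fin.revPerm * α) (Fin.revPerm * β) n = sContainBoth α β n :=
  (Nat.card_congr <| (Equiv.mulLeft Fin.revPerm).subtypeEquiv fun π => by
    simp [containsOnce, occCount_complement]).symm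

theorem sContainBoth_p132_p321 : sContainBoth p132 p321 n = sContainBoth p213 p321 n := by
  rw [← sContainBoth_reverse n p213, ← sContainBoth_complement]
  congr 1 <;> decide

theorem sContainBoth_p123_p231 : sContainBoth p123 p231 n = sContainBoth p213 p321 n := by
  rw [← sContainBoth_p132_p321, sContainBoth_comm n p132, ← sContainBoth_reverse n p321]
  congr 1 <;> decide

theorem sContainBoth_p123_p312 : sContainBoth p123 p312 n = sContainBoth p213 p321 n := by
  rw [sContainBoth_comm n p213, ← sContainBoth_reverse n p321]
  congr 1 <;> decide

theorem sContainBoth_succ (hα : α 0 ≠ 0) (hβ : β 0 ≠ 0) :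
    sContainBoth α β (n + 1) = sContainBoth α β n +
      {π : Perm (Fin (n + 1)) | (containsOnce α π ∧ containsOnce β π) ∧ π 0 ≠ 0}.ncard := by
  have hinj : Injective fun e : Perm (Fin n) => Perm.decomposeFin.symm (0, e) :=
    Perm.decomposeFin.symm.injective.comp (Prod.mk_right_injective 0)
  have himage : (fun e => Perm.decomposeFin.symm (0, e)) ''
      {e : Perm (Fin n) | containsOnce α e ∧ containsOnce β e} =
      {π | containsOnce α π ∧ containsOnce β π} ∩ {π | π 0 = 0} := by
    ext π
    simp only [mem_inter_iff, mem_ofPred_eq, ← exists_decomposeFin_symm_zero_eq_iff]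
    constructor
    · rintro ⟨e, he, rfl⟩
      simpa [containsOnce, occCount_decomposeFin_symm_zero, hα, hβ] using he
    · rintro ⟨he, e, rfl⟩
      exact ⟨e, by simpa [containsOnce, occCount_decomposeFin_symm_zero, hα, hβ] using he, rfl⟩
  calc sContainBoth α β (n + 1)
      = {π : Perm (Fin (n + 1)) | containsOnce α π ∧ containsOnce β π}.ncard := rfl
    _ = _ := (ncard_inter_add_ncard_sdiff_eq_ncard _ {π | π 0 = 0}).symm
    _ = _ := by rw [← himage, ncard_image_of_injective _ hinj]; rfl

end Count

section Triples

variable {ι α : Type*}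

/-- The ternary relation `T` holds for at most one triple. -/
def AtMostOnce (T : ι → ι → ι → Prop) : Prop :=
  ∀ ⦃i j k⦄, T i j k → ∀ ⦃i' j' k'⦄, T i' j' k' → i = i' ∧ j = j' ∧ k = k'

theorem exists_and_atMostOnce_of_forall_iff {T : ι → ι → ι → Prop} {a b c : ι}
    (h : ∀ i j k, T i j k ↔ i = a ∧ j = b ∧ k = c) : (∃ i j k, T i j k) ∧ AtMostOnce T := by
  refine ⟨⟨a, b, c, (h a b c).mpr ⟨rfl, rfl, rfl⟩⟩, fun i j k hT i' j' k' hT' => ?_⟩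
  obtain ⟨rfl, rfl, rfl⟩ := (h i j k).mp hT
  obtain ⟨rfl, rfl, rfl⟩ := (h i' j' k').mp hT'
  exact ⟨rfl, rfl, rfl⟩

instance [Fintype ι] [DecidableEq ι] (T : ι → ι → ι → Prop) [∀ i j k, Decidable (T i j k)] :
    Decidable (AtMostOnce T) :=
  decidable_of_iff (∀ i j k, T i j k → ∀ i' j' k', T i' j' k' → i = i' ∧ j = j' ∧ k = k') Iff.rfl

variable [LinearOrder ι] [LinearOrder α]

/-- The terms of the sequence `f` at positions `i`, `j`, `k` form the pattern `213`. -/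
def Is213 (f : ι → α) (i j k : ι) : Prop :=
  i < j ∧ j < k ∧ f j < f i ∧ f i < f k

/-- The terms of the sequence `f` at positions `i`, `j`, `k` form the pattern `321`. -/
def Is321 (f : ι → α) (i j k : ι) : Prop :=
  i < j ∧ j < k ∧ f k < f j ∧ f j < f i

instance (f : ι → α) (i j k : ι) : Decidable (Is213 f i j k) :=
  inferInstanceAs (Decidable (_ ∧ _))

instance (f : ι → α) (i j k : ι) : Decidable (Is321 f i j k) :=
  inferInstanceAs (Decidable (_ ∧ _))

variable {f : ι → α} {i j k m x y : ι} {s : Set ι}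

theorem is213_iff_not (hf : Injective f) :
    Is213 f i j k ↔ i < j ∧ j < k ∧ f j < f i ∧ ¬ f k < f i := by
  refine and_congr_right fun hij => and_congr_right fun hjk => and_congr_right fun _ => ?_
  exact (not_lt.trans (hf.ne (hij.trans hjk).ne).le_iff_lt).symm

theorem strictMonoOn_of_two_below (hf : Injective f) (h321 : AtMostOnce (Is321 f)) {c d : ι}
    (hcd : c ≠ d) (hc : ∀ a ∈ s, a < c ∧ f c < f a) (hd : ∀ a ∈ s, a < d ∧ f d < f a) :
    StrictMonoOn f s := by
  intro a _ b hb hab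
  by_contra hlt
  have hba : f b < f a := lt_of_le_of_ne (not_lt.mp hlt) (hf.ne hab.ne')
  exact hcd (h321 ⟨hab, (hc b hb).1, (hc b hb).2, hba⟩ ⟨hab, (hd b hb).1, (hd b hb).2, hba⟩).2.2

theorem strictMonoOn_of_two_above (hf : Injective f) (h321 : AtMostOnce (Is321 f)) {c d : ι}
    (hcd : c ≠ d) (hc : ∀ a ∈ s, c < a ∧ f a < f c) (hd : ∀ a ∈ s, d < a ∧ f a < f d) :
    StrictMonoOn f s := by
  intro a ha b _ hab
  by_contra hlt
  have hba : f b < f a := lt_of_le_of_ne (not_lt.mp hlt) (hf.ne hab.ne')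
  exact hcd (h321 ⟨(hc a ha).1, hab, hba, (hc a ha).2⟩ ⟨(hd a ha).1, hab, hba, (hd a ha).2⟩).1

theorem covBy_of_unique_inversion (hf : Injective f) [s.OrdConnected]
    (hinv : ∀ a ∈ s, ∀ b ∈ s, a < b → f b < f a → a = i ∧ b = j)
    (hi : i ∈ s) (hj : j ∈ s) (hij : i < j) (hji : f j < f i) : i ⋖ j := by
  refine ⟨hij, fun t hit htj => ?_⟩
  have ht : t ∈ s := OrdConnected.out ‹_› hi hj ⟨hit.le, htj.le⟩
  rcases lt_or_gt_of_ne (hf.ne hit.ne) with hlt | hgt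
  · exact hit.ne' (hinv t ht j hj htj (hji.trans hlt)).1
  · exact htj.ne (hinv i hi t ht hit hgt).2

theorem eq_of_unique_inversion_of_is213 (hf : Injective f) (h213 : AtMostOnce (Is213 f))
    (hinv : ∀ a ∈ s, ∀ b ∈ s, a < b → f b < f a → a = i ∧ b = j)
    (hijk : Is213 f i j k) (hi : i ∈ s) {t : ι} (ht : t ∈ s) (hjt : j < t) : t = k := by
  have hit : i < t := hijk.1.trans hjt
  rcases lt_or_gt_of_ne (hf.ne hit.ne) with hlt | hgt
  · exact (h213 ⟨hijk.1, hjt, hijk.2.2.1, hlt⟩ hijk).2.2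
  · exact absurd (hinv i hi t ht hit hgt).2 hjt.ne'

theorem covBy_of_unique_inversion_of_is213 (hf : Injective f) [s.OrdConnected]
    (h213 : AtMostOnce (Is213 f)) (hinv : ∀ a ∈ s, ∀ b ∈ s, a < b → f b < f a → a = i ∧ b = j)
    (hijk : Is213 f i j k) (hi : i ∈ s) (hk : k ∈ s) : i ⋖ j ∧ j ⋖ k ∧ IsGreatest s k := by
  have hj : j ∈ s := OrdConnected.out ‹_› hi hk ⟨hijk.1.le, hijk.2.1.le⟩
  have hlast {t : ι} (ht : t ∈ s) (hjt : j < t) : t = k :=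
    eq_of_unique_inversion_of_is213 hf h213 hinv hijk hi ht hjt
  refine ⟨covBy_of_unique_inversion hf hinv hi hj hijk.1 hijk.2.2.1, ⟨hijk.2.1, ?_⟩, hk, ?_⟩
  · intro t hjt htk
    exact htk.ne (hlast (OrdConnected.out ‹_› hj hk ⟨hjt.le, htk.le⟩) hjt)
  · intro t ht
    rcases le_or_gt t j with htj | hjt
    · exact htj.trans hijk.2.1.le
    · exact (hlast ht hjt).le

/-- The position `m` carries the least term of `f`, and `x`, `y` are positions on either side of it
with `f x < f y`, so that `x`, `m`, `y` are the positions of an occurrence of `213`. -/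
structure IsAscentAcrossMin (f : ι → α) (m x y : ι) : Prop where
  apply_lt : ∀ t ≠ m, f m < f t
  left_lt : x < m
  lt_right : m < y
  apply_left_lt : f x < f y

namespace IsAscentAcrossMin

theorem is213 (h : IsAscentAcrossMin f m x y) : Is213 f x m y :=
  ⟨h.left_lt, h.lt_right, h.apply_lt x h.left_lt.ne, h.apply_left_lt⟩

theorem apply_lt_of_ne (h : IsAscentAcrossMin f m x y) (hf : Injective f)
    (h213 : AtMostOnce (Is213 f)) {a b : ι} (ha : a < m) (hb : m < b) (hne : a ≠ x ∨ b ≠ y) :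
    f b < f a := by
  by_contra hle
  have hab : f a < f b := lt_of_le_of_ne (not_lt.mp hle) (hf.ne (ha.trans hb).ne)
  obtain ⟨rfl, -, rfl⟩ := h213 ⟨ha, hb, h.apply_lt a ha.ne, hab⟩ h.is213
  exact hne.elim (· rfl) (· rfl)

theorem right_le (h : IsAscentAcrossMin f m x y) (hf : Injective f)
    (h213 : AtMostOnce (Is213 f)) {b : ι} (hb : m < b) : y ≤ b := by
  by_contra! hby
  have hbx : f b < f x := h.apply_lt_of_ne hf h213 h.left_lt hb (Or.inr hby.ne)
  exact hb.ne (h213 h.is213 ⟨h.left_lt.trans hb, hby, hbx, h.apply_left_lt⟩).2.1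

theorem ne_of_is321 (h : IsAscentAcrossMin f m x y) {p q r : ι} (hpqr : Is321 f p q r) :
    q ≠ m := by
  rintro rfl
  exact (h.apply_lt r hpqr.2.1.ne').not_gt hpqr.2.2.1

theorem strictMonoOn_Iio (h : IsAscentAcrossMin f m x y) (hf : Injective f)
    (h213 : AtMostOnce (Is213 f)) (h321 : AtMostOnce (Is321 f)) {z : ι} (hmz : m < z)
    (hzy : z ≠ y) : StrictMonoOn f (Iio m) :=
  strictMonoOn_of_two_below hf h321 hmz.ne (fun a ha => ⟨ha, h.apply_lt a ha.ne⟩)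
    fun _ ha => ⟨ha.trans hmz, h.apply_lt_of_ne hf h213 ha hmz (Or.inr hzy)⟩

theorem strictMonoOn_Ioi_sdiff (h : IsAscentAcrossMin f m x y) (hf : Injective f)
    (h213 : AtMostOnce (Is213 f)) (h321 : AtMostOnce (Is321 f)) :
    StrictMonoOn f (Ioi m \ {y}) := by
  have hlow {b : ι} (hb : b ∈ Ioi m \ {y}) : f b < f x :=
    h.apply_lt_of_ne hf h213 h.left_lt hb.1 (Or.inr hb.2)
  exact strictMonoOn_of_two_above hf h321 (h.left_lt.trans h.lt_right).ne
    (fun b hb => ⟨h.left_lt.trans hb.1, hlow hb⟩)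
    fun b hb => ⟨(h.right_le hf h213 hb.1).lt_of_ne' hb.2, (hlow hb).trans h.apply_left_lt⟩

theorem mem_of_is321 (h : IsAscentAcrossMin f m x y) (hf : Injective f)
    (h213 : AtMostOnce (Is213 f)) (h321 : AtMostOnce (Is321 f)) {p q r : ι} (hpqr : Is321 f p q r)
    {z : ι} (hmz : m < z) (hzy : z ≠ y) :
    p ∈ Iio m \ {x} ∧ q = y ∧ r ∈ Ioi m \ {y} := by
  have hmq : m < q := by
    refine (h.ne_of_is321 hpqr).lt_or_gt.resolve_left fun hqm => ?_
    exact (h.strictMonoOn_Iio hf h213 h321 hmz hzy (hpqr.1.trans hqm) hqm hpqr.1).not_gt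
      hpqr.2.2.2
  have hr : r ∈ Ioi m \ {y} :=
    ⟨hmq.trans hpqr.2.1, ((h.right_le hf h213 hmq).trans_lt hpqr.2.1).ne'⟩
  obtain rfl : y = q := by
    by_contra hyq
    exact (h.strictMonoOn_Ioi_sdiff hf h213 h321 ⟨hmq, Ne.symm hyq⟩ hr hpqr.2.1).not_gt hpqr.2.2.1
  have hpx : p ≠ x := by
    rintro rfl
    exact h.apply_left_lt.not_gt hpqr.2.2.2
  have hpm : p < m := by
    refine lt_of_not_ge fun hmp => ?_
    rcases hmp.eq_or_lt with rfl | hmp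
    · exact (h.apply_lt y hmq.ne').not_gt hpqr.2.2.2
    · exact (h.right_le hf h213 hmp).not_gt hpqr.1
  exact ⟨⟨hpm, hpx⟩, rfl, hr⟩

theorem is321 (h : IsAscentAcrossMin f m x y) (hf : Injective f) (h213 : AtMostOnce (Is213 f))
    {a b : ι} (ha : a ∈ Iio m \ {x}) (hb : b ∈ Ioi m \ {y}) : Is321 f a y b :=
  ⟨ha.1.trans h.lt_right, (h.right_le hf h213 hb.1).lt_of_ne' hb.2,
    (h.apply_lt_of_ne hf h213 h.left_lt hb.1 (Or.inr hb.2)).trans h.apply_left_lt,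
    h.apply_lt_of_ne hf h213 ha.1 h.lt_right (Or.inl ha.2)⟩

theorem eq_of_ne_right (h : IsAscentAcrossMin f m x y) (hf : Injective f)
    (h213 : AtMostOnce (Is213 f)) (h321 : AtMostOnce (Is321 f)) {p q r : ι} (hpqr : Is321 f p q r)
    {z : ι} (hmz : m < z) (hzy : z ≠ y) (t : ι) : t = x ∨ t = p ∨ t = m ∨ t = y ∨ t = r := by
  obtain ⟨hp, -, hr⟩ := h.mem_of_is321 hf h213 h321 hpqr hmz hzy
  have hpr : Is321 f p y r := h.is321 hf h213 hp hr
  rcases lt_trichotomy t m with ht | rfl | ht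
  · by_cases htx : t = x
    · simp [htx]
    · simp [(h321 (h.is321 hf h213 ⟨ht, htx⟩ hr) hpr).1]
  · simp
  · by_cases hty : t = y
    · simp [hty]
    · simp [(h321 (h.is321 hf h213 hp ⟨ht, hty⟩) hpr).2.2]

theorem eq_of_forall_eq_right (h : IsAscentAcrossMin f m x y) (hf : Injective f)
    (h213 : AtMostOnce (Is213 f)) (h321 : AtMostOnce (Is321 f)) {p q r : ι} (hpqr : Is321 f p q r)
    (hy : ∀ b, m < b → b = y) (t : ι) : t = x ∨ t = p ∨ t = m ∨ t = y := by
  have hcross {a : ι} (ha : a < m) (hax : a ≠ x) : f y < f a :=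
    h.apply_lt_of_ne hf h213 ha h.lt_right (Or.inl hax)
  have hleft : StrictMonoOn f (Iio m \ {x}) :=
    strictMonoOn_of_two_below hf h321 h.lt_right.ne (fun a ha => ⟨ha.1, h.apply_lt a ha.1.ne⟩)
      fun a ha => ⟨ha.1.trans h.lt_right, hcross ha.1 ha.2⟩
  have hqm : q < m := by
    refine (h.ne_of_is321 hpqr).lt_or_gt.resolve_right fun hmq => hpqr.2.1.ne ?_
    rw [hy q hmq, hy r (hmq.trans hpqr.2.1)]
  obtain rfl : q = x := by
    by_contra hqx
    have hpx : p ≠ x := by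
      rintro rfl
      exact (h.apply_left_lt.trans (hcross hqm hqx)).not_gt hpqr.2.2.2
    exact (hleft ⟨hpqr.1.trans hqm, hpx⟩ ⟨hqm, hqx⟩ hpqr.1).not_gt hpqr.2.2.2
  have hpm : p < m := hpqr.1.trans hqm
  have h321_of {a : ι} (ha : a < q) : Is321 f a q m :=
    ⟨ha, hqm, h.apply_lt q hqm.ne, h.apply_left_lt.trans (hcross (ha.trans hqm) ha.ne)⟩
  rcases lt_trichotomy t m with ht | rfl | ht
  · rcases lt_trichotomy t q with htq | rfl | htq
    · simp [(h321 (h321_of htq) (h321_of hpqr.1)).1]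
    · simp
    · have hpt : f p < f t := hleft ⟨hpm, hpqr.1.ne⟩ ⟨ht, htq.ne'⟩ (hpqr.1.trans htq)
      exact absurd (h213 ⟨hpqr.1, htq, hpqr.2.2.2, hpt⟩ h.is213).2.1 hqm.ne
  · simp
  · simp [hy t ht]

theorem card_le_five [Fintype ι] (h : IsAscentAcrossMin f m x y) (hf : Injective f)
    (h213 : AtMostOnce (Is213 f)) (h321 : AtMostOnce (Is321 f)) {p q r : ι}
    (hpqr : Is321 f p q r) : Fintype.card ι ≤ 5 := by
  by_cases hy : ∀ b, m < b → b = y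
  · have huniv : Finset.univ ⊆ {x, p, m, y} := fun t _ => by
      simpa using h.eq_of_forall_eq_right hf h213 h321 hpqr hy t
    exact (Finset.card_le_card huniv).trans (Finset.card_le_four.trans (by norm_num))
  · push Not at hy
    obtain ⟨z, hmz, hzy⟩ := hy
    have huniv : Finset.univ ⊆ {x, p, m, y, r} := fun t _ => by
      simpa using h.eq_of_ne_right hf h213 h321 hpqr hmz hzy t
    exact (Finset.card_le_card huniv).trans Finset.card_le_five

end IsAscentAcrossMin

theorem lt_of_is213_of_forall_lt (hf : Injective f) (h321 : AtMostOnce (Is321 f))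
    (hmin : ∀ t ≠ m, f m < f t) (hcross : ∀ a < m, ∀ b > m, f b < f a) (hmy : m < y)
    (hijk : Is213 f i j k) : m < i := by
  have hmono : StrictMonoOn f (Iio m) :=
    strictMonoOn_of_two_below hf h321 hmy.ne (fun a ha => ⟨ha, hmin a ha.ne⟩)
      fun a ha => ⟨ha.trans hmy, hcross a ha y hmy⟩
  obtain ⟨hij, hjk, hji, hik⟩ := hijk
  by_contra! him
  rcases him.eq_or_lt with rfl | him
  · exact (hmin j hij.ne').not_gt hji
  · have hmj : m ≤ j := le_of_not_gt fun hjm => (hmono him hjm hij).not_gt hji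
    exact (hcross i him k (hmj.trans_lt hjk)).not_gt hik

theorem eq_of_lt_of_is213_of_forall_lt (hf : Injective f) (h321 : AtMostOnce (Is321 f))
    (hcross : ∀ a < m, ∀ b > m, f b < f a) (hijk : Is213 f i j k) (hi : m < i) (hx : x < m)
    (hy : y < m) : x = y := by
  by_contra hxy
  have hmono : StrictMonoOn f (Ioi m) :=
    strictMonoOn_of_two_above hf h321 hxy (fun b hb => ⟨hx.trans hb, hcross x hx b hb⟩)
      fun b hb => ⟨hy.trans hb, hcross y hy b hb⟩
  exact (hmono hi (hi.trans hijk.1) hijk.1).not_gt hijk.2.2.1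

end Triples

section ContainsOnce

variable {n : ℕ}

theorem containsOnce_iff_of_forall_isOccurrence_iff {α : Perm (Fin 3)} {π : Perm (Fin n)}
    {T : Fin n → Fin n → Fin n → Prop}
    (hT : ∀ f, IsOccurrence α π f ↔ T (f 0) (f 1) (f 2)) :
    containsOnce α π ↔ (∃ i j k, T i j k) ∧ AtMostOnce T := by
  rw [containsOnce, occCount_eq_card_isOccurrence, Nat.card_eq_one_iff_unique, and_comm]
  refine and_congr ⟨fun ⟨f, hf⟩ => ⟨_, _, _, (hT f).mp hf⟩,
    fun ⟨i, j, k, h⟩ => ⟨![i, j, k], (hT _).mpr h⟩⟩ ⟨fun _ i j k h i' j' k' h' => ?_, fun h => ?_⟩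
  · have heq : (⟨_, (hT ![i, j, k]).mpr h⟩ : {f // IsOccurrence α π f}) =
      ⟨_, (hT ![i', j', k']).mpr h'⟩ := Subsingleton.elim _ _
    simpa using heq
  · refine ⟨fun ⟨f, hf⟩ ⟨g, hg⟩ => Subtype.ext <| funext ?_⟩
    simpa [Fin.forall_fin_succ] using h ((hT f).mp hf) ((hT g).mp hg)

theorem strictMono_fin_three_iff {ι : Type*} [Preorder ι] {f : Fin 3 → ι} :
    StrictMono f ↔ f 0 < f 1 ∧ f 1 < f 2 := by
  simp [Fin.strictMono_iff_lt_succ, Fin.forall_fin_two]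

theorem containsOnce_p213_iff {π : Perm (Fin n)} :
    containsOnce p213 π ↔ (∃ i j k, Is213 π i j k) ∧ AtMostOnce (Is213 π) := by
  refine containsOnce_iff_of_forall_isOccurrence_iff fun f => ?_
  rw [isOccurrence_iff_strictMono, strictMono_fin_three_iff, strictMono_fin_three_iff]
  exact and_assoc

theorem containsOnce_p321_iff {π : Perm (Fin n)} :
    containsOnce p321 π ↔ (∃ i j k, Is321 π i j k) ∧ AtMostOnce (Is321 π) := by
  refine containsOnce_iff_of_forall_isOccurrence_iff fun f => ?_
  rw [isOccurrence_iff_strictMono, strictMono_fin_three_iff, strictMono_fin_three_iff]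
  exact and_assoc

instance (π : Perm (Fin n)) : Decidable (containsOnce p213 π) :=
  decidable_of_iff' _ containsOnce_p213_iff

instance (π : Perm (Fin n)) : Decidable (containsOnce p321 π) :=
  decidable_of_iff' _ containsOnce_p321_iff

theorem sContainBoth_p213_p321_four : sContainBoth p213 p321 4 = 2 := by
  rw [sContainBoth, Nat.card_eq_fintype_card]
  decide +kernel

theorem sContainBoth_p213_p321_five : sContainBoth p213 p321 5 = 5 := by
  rw [sContainBoth, Nat.card_eq_fintype_card]
  decide +kernel

end ContainsOnce

section ExceptionalPermutations

theorem equiv_eq_of_forall_lt_imp_lt_iff {ι α : Type*} [LinearOrder ι] [LinearOrder α]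
    [WellFoundedLT α] {π σ : ι ≃ α} (h : ∀ i j, i < j → (π j < π i ↔ σ j < σ i)) : π = σ := by
  have hlt {i j : ι} (hσ : σ i < σ j) : π i < π j := by
    rcases lt_trichotomy i j with hij | rfl | hji
    · have hle : π i ≤ π j := not_lt.mp fun hπ => hσ.not_gt ((h i j hij).mp hπ)
      exact hle.lt_of_ne (π.injective.ne hij.ne)
    · exact absurd hσ (lt_irrefl _)
    · exact (h j i hji).mpr hσ
  have hmono : StrictMono (σ.symm.trans π) := fun a b hab => hlt (by simpa using hab)
  have hrefl : hmono.orderIsoOfSurjective _ (σ.symm.trans π).surjective = OrderIso.refl α :=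
    Subsingleton.elim _ _
  ext i
  simpa using DFunLike.congr_fun hrefl (σ i)

variable {n : ℕ}

theorem val_finRotate_succ (i : Fin (n + 1)) :
    (finRotate (n + 1) i).val = if i.val = n then 0 else i.val + 1 := by
  rw [coe_finRotate]
  simp [Fin.ext_iff]

theorem val_finRotate_succ_symm (i : Fin (n + 1)) :
    ((finRotate (n + 1)).symm i).val = if i.val = 0 then n else i.val - 1 := by
  obtain ⟨j, rfl⟩ := (finRotate (n + 1)).surjective i
  rw [symm_apply_apply, val_finRotate_succ]
  grind

theorem val_swap (a b i : Fin n) :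
    (swap a b i).val = if i.val = a.val then b.val else if i.val = b.val then a.val else i.val := by
  simp only [swap_apply_def, Fin.ext_iff, apply_ite Fin.val]

/-- The permutation `2 3 ⋯ (n - 3) (n - 1) (n - 2) n 1` of length `n = N + 4`, the only one that
ends with its least letter and contains each of `213` and `321` once. -/
def rotateLeftSwap (N : ℕ) : Perm (Fin (N + 4)) :=
  finRotate (N + 4) * swap ⟨N, by lia⟩ ⟨N + 1, by lia⟩

/-- The permutation `n 1 2 ⋯ (n - 4) (n - 2) (n - 3) (n - 1)` of length `n = N + 4`. If `N ≥ 2`, it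
is the only one that neither begins nor ends with its least letter and contains each of `213` and
`321` once. -/
def rotateRightSwap (N : ℕ) : Perm (Fin (N + 4)) :=
  (finRotate (N + 4)).symm * swap ⟨N + 1, by lia⟩ ⟨N + 2, by lia⟩

theorem rotateLeftSwap_lt_iff {N : ℕ} {a b : Fin (N + 4)} (hab : a < b) :
    rotateLeftSwap N b < rotateLeftSwap N a ↔
      b.val = N + 3 ∨ a.val = N ∧ b.val = N + 1 := by
  simp only [rotateLeftSwap, Perm.mul_apply, Fin.lt_def, val_finRotate_succ, val_swap] at hab ⊢
  grind

theorem rotateRightSwap_lt_iff {N : ℕ} {a b : Fin (N + 4)} (hab : a < b) :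
    rotateRightSwap N b < rotateRightSwap N a ↔
      a.val = 0 ∨ a.val = N + 1 ∧ b.val = N + 2 := by
  simp only [rotateRightSwap, Perm.mul_apply, Fin.lt_def, val_finRotate_succ_symm,
    val_swap] at hab ⊢
  grind

theorem rotateLeftSwap_zero_ne_zero (N : ℕ) : rotateLeftSwap N 0 ≠ 0 :=
  Fin.ne_zero_of_lt ((rotateLeftSwap_lt_iff (N := N) Fin.last_pos).mpr (Or.inl rfl))

theorem rotateRightSwap_zero_ne_zero (N : ℕ) : rotateRightSwap N 0 ≠ 0 :=
  Fin.ne_zero_of_lt ((rotateRightSwap_lt_iff (N := N) Fin.last_pos).mpr (Or.inl rfl))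

theorem containsOnce_rotateLeftSwap (N : ℕ) :
    containsOnce p213 (rotateLeftSwap N) ∧ containsOnce p321 (rotateLeftSwap N) := by
  constructor
  · refine containsOnce_p213_iff.mpr (exists_and_atMostOnce_of_forall_iff
      (a := ⟨N, by lia⟩) (b := ⟨N + 1, by lia⟩) (c := ⟨N + 2, by lia⟩) fun i j k => ?_)
    rw [is213_iff_not (rotateLeftSwap N).injective]
    grind [rotateLeftSwap_lt_iff]
  · refine containsOnce_p321_iff.mpr (exists_and_atMostOnce_of_forall_iff
      (a := ⟨N, by lia⟩) (b := ⟨N + 1, by lia⟩) (c := ⟨N + 3, by lia⟩) fun i j k => ?_)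
    grind [rotateLeftSwap_lt_iff, Is321]

theorem containsOnce_rotateRightSwap (N : ℕ) :
    containsOnce p213 (rotateRightSwap N) ∧ containsOnce p321 (rotateRightSwap N) := by
  constructor
  · refine containsOnce_p213_iff.mpr (exists_and_atMostOnce_of_forall_iff
      (a := ⟨N + 1, by lia⟩) (b := ⟨N + 2, by lia⟩) (c := ⟨N + 3, by lia⟩) fun i j k => ?_)
    rw [is213_iff_not (rotateRightSwap N).injective]
    grind [rotateRightSwap_lt_iff]
  · refine containsOnce_p321_iff.mpr (exists_and_atMostOnce_of_forall_iff
      (a := 0) (b := ⟨N + 1, by lia⟩) (c := ⟨N + 2, by lia⟩) fun i j k => ?_)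
    grind [rotateRightSwap_lt_iff, Is321]

variable {N : ℕ} {π : Perm (Fin (N + 4))} {i j k m : Fin (N + 4)}

theorem apply_lt_of_apply_eq_zero {σ : Perm (Fin (n + 1))} {a : Fin (n + 1)} (ha : σ a = 0)
    (t : Fin (n + 1)) (ht : t ≠ a) : σ a < σ t := by
  rw [ha, Fin.pos_iff_ne_zero, ← ha]
  exact σ.injective.ne ht

theorem eq_rotateLeftSwap (h213 : AtMostOnce (Is213 π)) (h321 : AtMostOnce (Is321 π))
    (hijk : Is213 π i j k) (hlast : π (Fin.last (N + 3)) = 0) : π = rotateLeftSwap N := by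
  have hmin (t : Fin (N + 4)) (ht : t < Fin.last (N + 3)) : π (Fin.last (N + 3)) < π t :=
    apply_lt_of_apply_eq_zero hlast t ht.ne
  have hk : k < Fin.last (N + 3) := by
    refine Fin.lt_last_iff_ne_last.mpr fun hk => Fin.not_lt_zero (π i) ?_
    simpa [hk, hlast] using hijk.2.2.2
  have hj : j < Fin.last (N + 3) := hijk.2.1.trans hk
  have hinv : ∀ a ∈ Iio (Fin.last (N + 3)), ∀ b ∈ Iio (Fin.last (N + 3)), a < b → π b < π a →
      a = i ∧ b = j := fun a _ b hb hab hba => by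
    obtain ⟨hai, hbj, -⟩ := h321 ⟨hab, hb, hmin b hb, hba⟩ ⟨hijk.1, hj, hmin j hj, hijk.2.2.1⟩
    exact ⟨hai, hbj⟩
  obtain ⟨hij, hjk, -, hgreatest⟩ :=
    covBy_of_unique_inversion_of_is213 π.injective h213 hinv hijk (hijk.1.trans hj) hk
  have hkN : N + 2 ≤ k.val :=
    hgreatest (show (⟨N + 2, by lia⟩ : Fin (N + 4)) < Fin.last (N + 3) by simp [Fin.lt_def])
  rw [Fin.covBy_iff, Nat.covBy_iff_add_one_eq] at hij hjk
  refine equiv_eq_of_forall_lt_imp_lt_iff fun a b hab => ?_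
  rw [rotateLeftSwap_lt_iff hab]
  rcases (Fin.le_last b).eq_or_lt with rfl | hb
  · simp [hmin a hab]
  · have hba : π b < π a ↔ a = i ∧ b = j :=
      ⟨hinv a (hab.trans hb) b hb hab, by rintro ⟨rfl, rfl⟩; exact hijk.2.2.1⟩
    rw [hba]
    grind

theorem eq_rotateRightSwap (h213 : AtMostOnce (Is213 π)) (h321 : AtMostOnce (Is321 π))
    (hijk : Is213 π i j k) (hm : π m = 0) (hm0 : m ≠ 0) (hmlast : m ≠ Fin.last (N + 3))
    (hcross : ∀ a < m, ∀ b > m, π b < π a) : π = rotateRightSwap N := by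
  have hmin := apply_lt_of_apply_eq_zero hm
  have h0m : 0 < m := Fin.pos_iff_ne_zero.mpr hm0
  have hmi : m < i := lt_of_is213_of_forall_lt π.injective h321 hmin hcross
    (Fin.lt_last_iff_ne_last.mpr hmlast) hijk
  have hleft (a : Fin (N + 4)) (ha : a < m) : a = 0 :=
    eq_of_lt_of_is213_of_forall_lt π.injective h321 hcross hijk hmi ha h0m
  have hinv : ∀ a ∈ Ioi m, ∀ b ∈ Ioi m, a < b → π b < π a → a = i ∧ b = j :=
    fun a ha b _ hab hba => by
      have hi0 : Is321 π 0 i j := ⟨h0m.trans hmi, hijk.1, hijk.2.2.1, hcross 0 h0m i hmi⟩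
      exact (h321 ⟨h0m.trans ha, hab, hba, hcross 0 h0m a ha⟩ hi0).2
  obtain ⟨hij, hjk, -, hgreatest⟩ := covBy_of_unique_inversion_of_is213 π.injective h213 hinv hijk
    hmi (hmi.trans (hijk.1.trans hijk.2.1))
  have hk : Fin.last (N + 3) ≤ k := hgreatest (Fin.lt_last_iff_ne_last.mpr hmlast)
  have hkN : k.val = N + 3 := congrArg Fin.val (Fin.last_le_iff.mp hk)
  rw [Fin.covBy_iff, Nat.covBy_iff_add_one_eq] at hij hjk
  refine equiv_eq_of_forall_lt_imp_lt_iff fun a b hab => ?_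
  rw [rotateRightSwap_lt_iff hab]
  rcases lt_trichotomy a m with ha | rfl | ha
  · obtain rfl := hleft a ha
    have hba : π b < π 0 := by
      rcases lt_trichotomy b m with hb | rfl | hb
      · exact absurd (hleft b hb) hab.ne'
      · exact hmin 0 ha.ne
      · exact hcross 0 ha b hb
    simp [hba]
  · have hba : ¬ π b < π a := (hmin b hab.ne').not_gt
    grind
  · have hba : π b < π a ↔ a = i ∧ b = j :=
      ⟨hinv a ha b (ha.trans hab) hab, by rintro ⟨rfl, rfl⟩; exact hijk.2.2.1⟩
    rw [hba]
    grind

theorem eq_rotateLeftSwap_or_eq_rotateRightSwap (hN : 2 ≤ N) (h213 : containsOnce p213 π)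
    (h321 : containsOnce p321 π) (h0 : π 0 ≠ 0) : π = rotateLeftSwap N ∨ π = rotateRightSwap N := by
  obtain ⟨⟨i, j, k, hijk⟩, h213⟩ := containsOnce_p213_iff.mp h213
  obtain ⟨⟨p, q, r, hpqr⟩, h321⟩ := containsOnce_p321_iff.mp h321
  obtain ⟨m, hm⟩ := π.surjective 0
  have hm0 : m ≠ 0 := fun h => h0 (h ▸ hm)
  by_cases hmlast : m = Fin.last (N + 3)
  · exact Or.inl (eq_rotateLeftSwap h213 h321 hijk (hmlast ▸ hm))
  refine Or.inr (eq_rotateRightSwap h213 h321 hijk hm hm0 hmlast fun x hx y hy => ?_)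
  by_contra! hle
  have h : IsAscentAcrossMin π m x y :=
    ⟨apply_lt_of_apply_eq_zero hm, hx, hy, hle.lt_of_ne (π.injective.ne (hx.trans hy).ne)⟩
  have hcard : N + 4 ≤ 5 := by simpa using h.card_le_five π.injective h213 h321 hpqr
  lia

theorem setOf_containsOnce_and_apply_zero_ne_zero (hN : 2 ≤ N) :
    {π : Perm (Fin (N + 4)) | (containsOnce p213 π ∧ containsOnce p321 π) ∧ π 0 ≠ 0} =
      {rotateLeftSwap N, rotateRightSwap N} := by
  ext π
  constructor
  · rintro ⟨⟨h213, h321⟩, h0⟩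
    exact eq_rotateLeftSwap_or_eq_rotateRightSwap hN h213 h321 h0
  · rintro (rfl | rfl)
    · exact ⟨containsOnce_rotateLeftSwap N, rotateLeftSwap_zero_ne_zero N⟩
    · exact ⟨containsOnce_rotateRightSwap N, rotateRightSwap_zero_ne_zero N⟩

theorem rotateLeftSwap_ne_rotateRightSwap (hN : N ≠ 0) :
    rotateLeftSwap N ≠ rotateRightSwap N := by
  intro heq
  have h01 : (0 : Fin (N + 4)) < 1 := Fin.zero_lt_one
  have hleft := rotateLeftSwap_lt_iff h01
  rw [heq, rotateRightSwap_lt_iff h01] at hleft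
  simp only [Fin.val_zero, Fin.val_one, true_or, true_iff] at hleft
  lia

theorem sContainBoth_p213_p321_succ (hn : 5 ≤ n) :
    sContainBoth p213 p321 (n + 1) = sContainBoth p213 p321 n + 2 := by
  obtain ⟨N, rfl⟩ : ∃ N, n = N + 3 := ⟨n - 3, by lia⟩
  rw [sContainBoth_succ _ (by decide) (by decide),
    setOf_containsOnce_and_apply_zero_ne_zero (by lia),
    ncard_pair (rotateLeftSwap_ne_rotateRightSwap (by lia))]

theorem sContainBoth_p213_p321 (hn : 5 ≤ n) : sContainBoth p213 p321 n = 2 * n - 5 := by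
  induction n, hn using Nat.le_induction with
  | base => exact sContainBoth_p213_p321_five
  | succ n hn ih =>
    rw [sContainBoth_p213_p321_succ hn, ih]
    lia

end ExceptionalPermutations

/-- Theorem 5.2: for each listed pair `{α,β}`, `s_n(∅;{α,β}) = 2n−5` for `n ≥ 5`,
and `s_4(∅;{α,β}) = 2`. -/
theorem sContainBoth_eq_of_mem_classG :
    ∀ p ∈ [(p123, p231), (p123, p312), (p132, p321), (p213, p321)],
      (∀ n : ℕ, 5 ≤ n → sContainBoth p.1 p.2 n = 2 * n - 5) ∧
        sContainBoth p.1 p.2 4 = 2 := by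
  intro p hp
  have hp' (n : ℕ) : sContainBoth p.1 p.2 n = sContainBoth p213 p321 n := by
    simp only [List.mem_cons, List.not_mem_nil, or_false] at hp
    rcases hp with rfl | rfl | rfl | rfl
    · exact sContainBoth_p123_p231 n
    · exact sContainBoth_p123_p312 n
    · exact sContainBoth_p132_p321 n
    · rfl
  simp only [hp']
  exact ⟨fun n hn => sContainBoth_p213_p321 hn, sContainBoth_p213_p321_four⟩
end

section
/- For every n ≥ 6 there is no permutation of {1,…,n} that contains the pattern 123 exactly once and also contains the pattern 321 exactly once; that is, s_n(∅;{123,321}) = 0 for n ≥ 6. -/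
/-!
Colour a pair of positions by whether its values form an ascent or a descent. By Erdős–Szekeres,
five positions always contain a monotone triple, so among six positions no single position lies in
every monotone triple. If there were at most one increasing and at most one decreasing triple, both
would therefore exist and be disjoint, say `s` and `t`. No element of `t` ascends with two elements
of `s`, since these would form a second increasing triple; so each element of `t` descends with at
least two elements of `s`. Dually, each element of `s` descends with at most one element of `t`.
Counting the descents between `s` and `t` gives `3 * 2 ≤ 3 * 1`.
-/

open Finset OrderDual

section Increasing

variable {α β : Type*} [LinearOrder α] [LinearOrder β] {f : α → β} {s t : Finset α} {a b c : α}

/-- The `k`-element sets of positions along which `f` is increasing: the occurrences of the pattern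
`12⋯k`. The occurrences of `k⋯21` are encoded as `increasingSubsets k (toDual ∘ f)`, so that facts
about ascents can be applied to descents. -/
def increasingSubsets (k : ℕ) (f : α → β) : Set (Finset α) :=
  {s | #s = k ∧ StrictMonoOn f s}

theorem strictMonoOn_pair_iff (hab : a < b) : StrictMonoOn f {a, b} ↔ f a < f b := by
  simp [strictMonoOn_insert_iff, hab, hab.not_gt]

theorem strictMonoOn_iff_pairwise {s : Set α} :
    StrictMonoOn f s ↔ s.Pairwise fun a b ↦ StrictMonoOn f {a, b} := by
  refine ⟨fun h a ha b hb _ ↦ h.mono (Set.pair_subset ha hb), fun h a ha b hb hab ↦ ?_⟩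
  exact (strictMonoOn_pair_iff hab).mp (h ha hb hab.ne)

theorem strictMonoOn_pair_or_toDual_comp (hf : f a ≠ f b) :
    StrictMonoOn f {a, b} ∨ StrictMonoOn (toDual ∘ f) {a, b} := by
  wlog hab : a < b generalizing a b
  · have hba : b < a := (not_lt.mp hab).lt_of_ne fun h ↦ hf (congrArg f h.symm)
    simpa only [Set.pair_comm] using this hf.symm hba
  · simpa only [strictMonoOn_pair_iff hab, Function.comp_apply, toDual_lt_toDual] using hf.lt_or_gt

theorem triple_mem_increasingSubsets (hab : a ≠ b) (hac : a ≠ c) (hbc : b ≠ c)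
    (fab : StrictMonoOn f {a, b}) (fac : StrictMonoOn f {a, c}) (fbc : StrictMonoOn f {b, c}) :
    {a, b, c} ∈ increasingSubsets 3 f := by
  refine ⟨card_eq_three.mpr ⟨a, b, c, hab, hac, hbc, rfl⟩, strictMonoOn_iff_pairwise.mpr ?_⟩
  have : Std.Symm fun x y ↦ StrictMonoOn f {x, y} :=
    ⟨fun x y h ↦ by simpa only [Set.pair_comm] using h⟩
  push_cast
  simp [Set.pairwise_insert_of_symm, fab, fac, fbc]

/-- `a` is the upper end of an ascent of `f` within `s`; the label distinguishing positions in the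
proof of the Erdős–Szekeres theorem. -/
def EndsAscent (f : α → β) (s : Finset α) (a : α) : Prop :=
  ∃ c ∈ s, c < a ∧ f c < f a

theorem exists_mem_increasingSubsets_of_endsAscent_iff (ha : a ∈ s) (hb : b ∈ s) (hab : a < b)
    (fab : f a < f b) (h : EndsAscent f s a ↔ EndsAscent f s b) :
    ∃ u ⊆ s, u ∈ increasingSubsets 3 f := by
  obtain ⟨c, hc, hca, fca⟩ : EndsAscent f s a := h.mpr ⟨a, ha, hab, fab⟩
  refine ⟨{c, a, b}, by simp [insert_subset_iff, *], ?_⟩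
  have hcb : c < b := hca.trans hab
  exact triple_mem_increasingSubsets hca.ne hcb.ne hab.ne ((strictMonoOn_pair_iff hca).mpr fca)
    ((strictMonoOn_pair_iff hcb).mpr (fca.trans fab)) ((strictMonoOn_pair_iff hab).mpr fab)

theorem exists_monotone_triple (hf : Set.InjOn f s) (hs : 4 < #s) :
    ∃ u ⊆ s, u ∈ increasingSubsets 3 f ∨ u ∈ increasingSubsets 3 (toDual ∘ f) := by
  let label (x : α) : Prop × Prop := (EndsAscent f s x, EndsAscent (toDual ∘ f) s x)
  obtain ⟨a, ha, b, hb, hne, hlabel⟩ : ∃ a ∈ s, ∃ b ∈ s, a ≠ b ∧ label a = label b :=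
    exists_ne_map_eq_of_card_lt_of_maps_to (t := univ) (by simpa using hs) (by simp [Set.MapsTo])
  wlog hab : a < b generalizing a b
  · exact this b hb a ha hne.symm hlabel.symm (hne.lt_or_gt.resolve_left hab)
  obtain ⟨hup, hdown⟩ := Prod.mk.inj hlabel
  rcases (hf.ne ha hb hne).lt_or_gt with fab | fba
  · obtain ⟨u, hus, hu⟩ := exists_mem_increasingSubsets_of_endsAscent_iff ha hb hab fab hup.to_iff
    exact ⟨u, hus, .inl hu⟩
  · obtain ⟨u, hus, hu⟩ := exists_mem_increasingSubsets_of_endsAscent_iff (f := toDual ∘ f)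
      ha hb hab fba hdown.to_iff
    exact ⟨u, hus, .inr hu⟩

theorem exists_monotone_triple_notMem (hf : Set.InjOn f s) (hs : 5 < #s) (a : α) :
    ∃ u ⊆ s, a ∉ u ∧ (u ∈ increasingSubsets 3 f ∨ u ∈ increasingSubsets 3 (toDual ∘ f)) := by
  have hcard : 4 < #(s.erase a) := by have := pred_card_le_card_erase (s := s) (a := a); lia
  obtain ⟨u, hus, hu⟩ := exists_monotone_triple (hf.mono (coe_subset.mpr (erase_subset a s))) hcard
  exact ⟨u, hus.trans (erase_subset a s), fun ha ↦ notMem_erase a s (hus ha), hu⟩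

theorem exists_mem_increasingSubsets_three_of_subsingleton (hf : Set.InjOn f s) (hs : 5 < #s)
    (hdec : (increasingSubsets 3 (toDual ∘ f)).Subsingleton) :
    ∃ u ⊆ s, u ∈ increasingSubsets 3 f := by
  obtain ⟨u, hus, hu | hu⟩ := exists_monotone_triple hf (by lia : 4 < #s)
  · exact ⟨u, hus, hu⟩
  obtain ⟨a, ha⟩ : u.Nonempty := card_pos.mp (by simp [hu.1])
  obtain ⟨v, hvs, hav, hv | hv⟩ := exists_monotone_triple_notMem hf hs a
  · exact ⟨v, hvs, hv⟩
  · exact absurd (hdec hu hv ▸ ha) hav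

open scoped Classical in
theorem card_filter_strictMonoOn_pair_le_one (hinc : (increasingSubsets 3 f).Subsingleton)
    (hs : s ∈ increasingSubsets 3 f) (hb : b ∉ s) : #{a ∈ s | StrictMonoOn f {b, a}} ≤ 1 := by
  refine card_le_one.mpr fun a ha c hc ↦ by_contra fun hac ↦ hb ?_
  obtain ⟨has, fba⟩ := mem_filter.mp ha
  obtain ⟨hcs, fbc⟩ := mem_filter.mp hc
  have htriple : {b, a, c} ∈ increasingSubsets 3 f :=
    triple_mem_increasingSubsets (ne_of_mem_of_not_mem has hb).symm
      (ne_of_mem_of_not_mem hcs hb).symm hac fba fbc (hs.2.mono (Set.pair_subset has hcs))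
  exact hinc htriple hs ▸ mem_insert_self b {a, c}

theorem not_disjoint_of_mem_increasingSubsets_three (hf : Set.InjOn f (s ∪ t))
    (hinc : (increasingSubsets 3 f).Subsingleton)
    (hdec : (increasingSubsets 3 (toDual ∘ f)).Subsingleton)
    (hs : s ∈ increasingSubsets 3 f) (ht : t ∈ increasingSubsets 3 (toDual ∘ f)) :
    ¬Disjoint s t := by
  classical
  intro hst
  let Descent (b a : α) : Prop := StrictMonoOn (toDual ∘ f) {b, a}
  have hlower : ∀ b ∈ t, 2 ≤ #(s.bipartiteAbove Descent b) := by
    intro b hb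
    have hbs : b ∉ s := disjoint_right.mp hst hb
    have hdescent : {a ∈ s | ¬StrictMonoOn f {b, a}} ⊆ s.bipartiteAbove Descent b :=
      monotone_filter_right s fun a ha hnot ↦
        have hba : f b ≠ f a := hf.ne (.inr hb) (.inl ha) (ne_of_mem_of_not_mem ha hbs).symm
        (strictMonoOn_pair_or_toDual_comp hba).resolve_left hnot
    have hascent := card_filter_strictMonoOn_pair_le_one hinc hs hbs
    have hsplit := card_filter_add_card_filter_not (s := s) fun a ↦ StrictMonoOn f {b, a}
    have := card_le_card hdescent
    have := hs.1
    lia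
  have hupper : ∀ a ∈ s, #(t.bipartiteBelow Descent a) ≤ 1 := by
    intro a ha
    simpa only [bipartiteBelow, Descent, Set.pair_comm] using
      card_filter_strictMonoOn_pair_le_one hdec ht (disjoint_left.mp hst ha)
  have hcount := card_mul_le_card_mul Descent hlower hupper
  simp [hs.1, ht.1] at hcount

theorem nontrivial_increasingSubsets_three_or_toDual_comp (hf : Set.InjOn f s) (hs : 5 < #s) :
    (increasingSubsets 3 f).Nontrivial ∨ (increasingSubsets 3 (toDual ∘ f)).Nontrivial := by
  by_contra! ⟨hinc, hdec⟩
  obtain ⟨u, hus, hu⟩ := exists_mem_increasingSubsets_three_of_subsingleton hf hs hdec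
  obtain ⟨v, hvs, hv⟩ :=
    exists_mem_increasingSubsets_three_of_subsingleton (f := toDual ∘ f) hf hs hinc
  obtain ⟨a, hau, hav⟩ : ∃ a ∈ u, a ∈ v := not_disjoint_iff.mp <|
    not_disjoint_of_mem_increasingSubsets_three (hf.mono (Set.union_subset hus hvs)) hinc hdec hu hv
  obtain ⟨w, -, haw, hw | hw⟩ := exists_monotone_triple_notMem hf hs a
  · exact haw (hinc hu hw ▸ hau)
  · exact haw (hdec hv hw ▸ hav)

end Increasing

section Occurrences

variable {α β : Type*} [LinearOrder α] [LinearOrder β] {k n : ℕ}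

theorem card_strictMono_comp_eq_ncard_increasingSubsets (f : α → β) :
    Nat.card {e : Fin k → α // StrictMono e ∧ StrictMono (f ∘ e)} =
      (increasingSubsets k f).ncard := by
  refine Set.ncard_congr (fun e _ ↦ univ.image e) ?_ ?_ ?_
  · rintro e ⟨he, hfe⟩
    refine ⟨by simp [card_image_of_injective _ he.injective], ?_⟩
    rw [coe_image, coe_univ, Set.image_univ]
    rintro _ ⟨i, rfl⟩ _ ⟨j, rfl⟩ hij
    exact hfe (he.lt_iff_lt.mp hij)
  · rintro e e' ⟨he, -⟩ ⟨he', -⟩ himage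
    rw [← he.range_inj he']
    simpa using congrArg ((↑) : Finset α → Set α) himage
  · rintro s ⟨hs, hf⟩
    have he := (s.orderEmbOfFin hs).strictMono
    exact ⟨s.orderEmbOfFin hs, ⟨he, fun i j hij ↦ hf (by simp) (by simp) (he hij)⟩, by simp⟩

theorem occCount_one (π : Equiv.Perm (Fin n)) :
    occCount (1 : Equiv.Perm (Fin k)) π = (increasingSubsets k π).ncard := by
  rw [← card_strictMono_comp_eq_ncard_increasingSubsets]
  refine Nat.card_congr (Equiv.subtypeEquivRight fun e ↦ and_congr_right fun _ ↦ ?_)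
  exact ⟨fun h i j hij ↦ (h i j).mp hij, fun h i j ↦ h.lt_iff_lt.symm⟩

theorem occCount_revPerm (π : Equiv.Perm (Fin n)) :
    occCount (Fin.revPerm : Equiv.Perm (Fin k)) π = (increasingSubsets k (toDual ∘ π)).ncard := by
  rw [← card_strictMono_comp_eq_ncard_increasingSubsets]
  refine Nat.card_congr (Equiv.subtypeEquivRight fun e ↦ and_congr_right fun _ ↦ ?_)
  simp only [Fin.revPerm_apply, Fin.rev_lt_rev]
  exact ⟨fun h i j hij ↦ (h j i).mp hij, fun h i j ↦ h.lt_iff_lt.symm⟩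

theorem p123_eq_one : p123 = 1 := by decide

theorem p321_eq_revPerm : p321 = Fin.revPerm := by decide

end Occurrences

theorem sContainBoth_123_321_eq_zero_general {n : ℕ} (hn : 6 ≤ n) (π : Equiv.Perm (Fin n)) :
    1 < occCount p123 π ∨ 1 < occCount p321 π := by
  rw [p123_eq_one, p321_eq_revPerm, occCount_one, occCount_revPerm,
    Set.one_lt_ncard_iff_nontrivial, Set.one_lt_ncard_iff_nontrivial]
  exact nontrivial_increasingSubsets_three_or_toDual_comp π.injective.injOn
    (hn.trans_eq (card_fin n).symm)

/-- `s_n(∅;{123,321}) = 0` for `n ≥ 6`. -/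
theorem sContainBoth_123_321_eq_zero :
    ∀ n : ℕ, 6 ≤ n → sContainBoth p123 p321 n = 0 := by
  intro n hn
  have : IsEmpty {π : Equiv.Perm (Fin n) // containsOnce p123 π ∧ containsOnce p321 π} :=
    ⟨fun ⟨π, hinc, hdec⟩ ↦ (sContainBoth_123_321_eq_zero_general hn π).elim hinc.not_gt hdec.not_gt⟩
  exact Nat.card_of_isEmpty
end
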